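/- For every positive integer k and every complex number s with 0 < Re s < 1/4, the Mellin transform ∫_0^∞ φ_k(x) x^{s-1} dx converges and equals (Γ(s)/Γ(1-s)) ∫_1^∞ Δ_k(r) (log r)^{-s} r^{-2} dr, where Γ is the Euler gamma function and the integral on the right converges absolutely. -/

import Mathlib

open scoped Real Topology
open Complex Filter MeasureTheory Finset Asymptotics

/-- The analytic extension of `s ↦ ((s-1) * ζ(s))^k` to `s = 1` (where its value is `1`). -/
noncomputable def zetaPowAux (k : ℕ) : ℂ → ℂ :=
  Function.update (fun s : ℂ => ((s - 1) * riemannZeta s) ^ k) 1 1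

/-- `lam k j` is the Taylor coefficient `λ_{j,k}`, i.e. the `j`-th derivative at `s = 1` of the
analytic extension of `(s-1)^k ζ(s)^k`; these numbers are real, and we record their real part. -/
noncomputable def lam (k j : ℕ) : ℝ :=
  (iteratedDeriv j (zetaPowAux k) 1).re

/-- The Fourier coefficients `ℓ_{n,k}` for `n ≥ -k` (an integer index). -/
noncomputable def ell (k : ℕ) (n : ℤ) : ℝ :=
  if 1 ≤ n then
    (-1 : ℝ) ^ n.toNat *
      ∑ j ∈ Finset.Icc 1 n.toNat,
        ((n.toNat - 1).choose (j - 1) : ℝ) * lam k (j + k) / (Nat.factorial (j + k))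
  else
    (-1 : ℝ) ^ k *
      ∑ j ∈ Finset.range ((k + n).toNat + 1),
        ((k - j).choose (-n).toNat : ℝ) * (-1 : ℝ) ^ j * lam k j / (Nat.factorial j)

/-- The Lindelöf Hypothesis: `ζ(1/2 + it) = O(|t|^ε)` for every `ε > 0`. -/
def LindelofHypothesis : Prop :=
  ∀ ε : ℝ, 0 < ε → ∃ C : ℝ, ∀ t : ℝ, 1 ≤ |t| →
    ‖riemannZeta (1 / 2 + t * Complex.I)‖ ≤ C * |t| ^ ε

/-- `dk k n` is the Piltz divisor function `d_k(n)`: the number of representations of `n` as an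
ordered product of `k` positive integers (the `k`-th Dirichlet-convolution power of `ζ`). -/
noncomputable def dk (k n : ℕ) : ℕ := (ArithmeticFunction.zeta ^ k) n

/-- The coefficients `a_{j,k}` of the polynomial `P_k`. -/
noncomputable def aCoef (k j : ℕ) : ℝ :=
  (-1 : ℝ) ^ (k - 1 - j) *
    ∑ i ∈ Finset.range (k - 1 - j + 1), (-1 : ℝ) ^ i * lam k i / (Nat.factorial i)

/-- The error term `Δ_k(x) = (Σ_{1 ≤ n ≤ x} d_k(n)) - x P_k(log x)` in the Piltz divisor
problem. -/
noncomputable def Deltak (k : ℕ) (x : ℝ) : ℝ :=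
  (∑ n ∈ Finset.Icc 1 ⌊x⌋₊, (dk k n : ℝ)) -
    x * ∑ j ∈ Finset.range k, aCoef k j / (Nat.factorial j) * (Real.log x) ^ j

/-- The `n`-th Laguerre polynomial. -/
noncomputable def laguerre (n : ℕ) (u : ℝ) : ℝ :=
  ∑ j ∈ Finset.range (n + 1), (n.choose j : ℝ) * (-1 : ℝ) ^ j * u ^ j / (Nat.factorial j)

/-- The Bessel function of the first kind of order `0`. -/
noncomputable def besselJ0 (u : ℝ) : ℝ :=
  ∑' m : ℕ, (-1 : ℝ) ^ m * (u / 2) ^ (2 * m) / ((Nat.factorial m : ℝ) ^ 2)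

/-- `φ_k(x) = ∫_1^∞ Δ_k(r) J₀(2 √(x log r)) r⁻² dr`. -/
noncomputable def phik (k : ℕ) (x : ℝ) : ℝ :=
  ∫ r in Set.Ioi (1 : ℝ), Deltak k r * besselJ0 (2 * Real.sqrt (x * Real.log r)) / r ^ 2

/-- The entire function `∑ (-y)^m / (m! (m+j)!)`, a normalized Bessel function of order `j`. -/
noncomputable def besselEntire (j : ℕ) (y : ℝ) : ℝ :=
  ∑' m : ℕ, (-1 : ℝ) ^ m * y ^ m / ((m.factorial : ℝ) * ((m + j).factorial : ℝ))

lemma norm_besselEntire_term_le (j m : ℕ) (y : ℝ) :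
    ‖(-1 : ℝ) ^ m * y ^ m / ((m.factorial : ℝ) * ((m + j).factorial : ℝ))‖ ≤
      |y| ^ m / (m.factorial : ℝ) := by
  have h1 : (1 : ℝ) ≤ ((m + j).factorial : ℝ) := by exact_mod_cast Nat.factorial_pos _
  have h2 : (0 : ℝ) < (m.factorial : ℝ) := by exact_mod_cast Nat.factorial_pos _
  rw [norm_div, norm_mul, norm_pow, norm_pow, norm_neg, norm_one, one_pow, one_mul,
    Real.norm_eq_abs, Real.norm_of_nonneg (by positivity)]
  gcongr
  nlinarith

lemma summable_besselEntire (j : ℕ) (y : ℝ) :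
    Summable fun m : ℕ => (-1 : ℝ) ^ m * y ^ m / ((m.factorial : ℝ) * ((m + j).factorial : ℝ)) :=
  .of_norm_bounded (Real.summable_pow_div_factorial |y|) fun m => norm_besselEntire_term_le j m y

lemma hasDerivAt_besselEntire (j : ℕ) (y : ℝ) :
    HasDerivAt (besselEntire j) (-besselEntire (j + 1) y) y := by
  set R := |y| + 1 with hR
  set f' : ℕ → ℝ → ℝ := fun m z =>
    (-1 : ℝ) ^ m * (m * z ^ (m - 1)) / ((m.factorial : ℝ) * ((m + j).factorial : ℝ)) with hf'
  have hsucc (n : ℕ) (z : ℝ) : f' (n + 1) z =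
      -((-1 : ℝ) ^ n * z ^ n / ((n.factorial : ℝ) * ((n + (j + 1)).factorial : ℝ))) := by
    have h1 : ((n + (j + 1)).factorial : ℝ) ≠ 0 := by exact_mod_cast (Nat.factorial_pos _).ne'
    have h2 : (n.factorial : ℝ) ≠ 0 := by exact_mod_cast (Nat.factorial_pos _).ne'
    have h3 : (n : ℝ) + 1 ≠ 0 := by positivity
    simp only [hf', Nat.factorial_succ n, Nat.add_sub_cancel, show n + 1 + j = n + (j + 1) by ring]
    push_cast
    field_simp
    ring
  have key : HasDerivAt (besselEntire j) (∑' m, f' m y) y := by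
    refine hasDerivAt_tsum_of_isPreconnected (t := Metric.ball 0 R)
      (u := fun m => match m with | 0 => 0 | n + 1 => R ^ n / (n.factorial : ℝ))
      ((summable_nat_add_iff 1).1 (Real.summable_pow_div_factorial R)) Metric.isOpen_ball
      (convex_ball 0 R).isPreconnected (fun n z _ => ?_) (fun n z hz => ?_)
      (y₀ := y) ?_ (summable_besselEntire j y) ?_
    · simpa only [hf'] using ((hasDerivAt_pow n z).const_mul ((-1 : ℝ) ^ n)).div_const _
    · rcases n with _ | n
      · simp [hf']
      · rw [hsucc, norm_neg]
        refine (norm_besselEntire_term_le _ _ _).trans ?_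
        have : |z| ≤ R := by simpa using (Metric.mem_ball.1 hz).le
        simp only
        gcongr
    · simp [hR]
    · simp [hR]
  have hsum : Summable fun m => f' m y := by
    refine (summable_nat_add_iff 1).1 ?_
    simp only [hsucc]
    exact (summable_besselEntire (j + 1) y).neg
  rw [hsum.tsum_eq_zero_add] at key
  simp only [hsucc, tsum_neg] at key
  simpa [hf', besselEntire] using key

lemma continuous_besselEntire (j : ℕ) : Continuous (besselEntire j) :=
  continuous_iff_continuousAt.2 fun y => (hasDerivAt_besselEntire j y).continuousAt

lemma besselEntire_ode (y : ℝ) :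
    y * besselEntire 2 y = besselEntire 1 y - besselEntire 0 y := by
  have h := (summable_besselEntire 1 y).sub (summable_besselEntire 0 y)
  rw [besselEntire, besselEntire, besselEntire, ← tsum_mul_left,
    ← (summable_besselEntire 1 y).tsum_sub (summable_besselEntire 0 y), h.tsum_eq_zero_add]
  simp only [pow_zero, Nat.factorial_zero, Nat.factorial_one, zero_add, sub_self]
  refine tsum_congr fun n => ?_
  have h2 : (n.factorial : ℝ) ≠ 0 := by exact_mod_cast (Nat.factorial_pos _).ne'
  have h3 : (n : ℝ) + 1 ≠ 0 := by positivity
  have h4 : (n : ℝ) + 1 + 1 ≠ 0 := by positivity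
  simp only [add_zero, Nat.factorial_succ]
  push_cast
  field_simp
  ring

lemma besselJ0_eq (u : ℝ) : besselJ0 u = besselEntire 0 (u ^ 2 / 4) := by
  refine tsum_congr fun m => ?_
  rw [add_zero, ← sq, pow_mul]
  congr 3
  ring

lemma besselJ0_two_mul_sqrt {y : ℝ} (hy : 0 ≤ y) :
    besselJ0 (2 * Real.sqrt y) = besselEntire 0 y := by
  rw [besselJ0_eq, mul_pow, Real.sq_sqrt hy]
  congr 1
  ring

/-- The energy `u K² + J K + (u + 1/(2u)) J²`, where `K` is the derivative of `J = J₀`, is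
nonincreasing, which gives the decay of `J₀`. -/
lemma exists_mul_besselJ0_sq_le : ∃ C : ℝ, ∀ u : ℝ, 1 ≤ u → u * besselJ0 u ^ 2 ≤ C := by
  set J : ℝ → ℝ := fun u => besselEntire 0 (u ^ 2 / 4)
  set J' : ℝ → ℝ := fun u => -(u / 2 * besselEntire 1 (u ^ 2 / 4)) with hJ'
  have hsq (u : ℝ) : HasDerivAt (fun u : ℝ => u ^ 2 / 4) (u / 2) u := by
    refine ((hasDerivAt_pow 2 u).div_const 4).congr_deriv ?_
    norm_num
    ring
  have hJd (u : ℝ) : HasDerivAt J (J' u) u := by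
    refine ((hasDerivAt_besselEntire 0 (u ^ 2 / 4)).comp u (hsq u)).congr_deriv ?_
    simp only [hJ']
    ring
  have hJd' (u : ℝ) (hu : u ≠ 0) : HasDerivAt J' (-J u - J' u / u) u := by
    refine ((((hasDerivAt_id u).div_const 2).mul
      ((hasDerivAt_besselEntire 1 (u ^ 2 / 4)).comp u (hsq u))).neg).congr_deriv ?_
    have := besselEntire_ode (u ^ 2 / 4)
    simp only [hJ', J, Function.comp, id]
    field_simp
    linear_combination 4 * this
  set E : ℝ → ℝ := fun u => u * J' u ^ 2 + J u * J' u + (u + 1 / (2 * u)) * J u ^ 2 with hE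
  have hEd (u : ℝ) (hu : u ≠ 0) : HasDerivAt E (-(J u ^ 2 / (2 * u ^ 2))) u := by
    have h1 := (hasDerivAt_id u).mul ((hJd' u hu).pow 2)
    have h2 := (hJd u).mul (hJd' u hu)
    have h3 := ((hasDerivAt_id u).add ((hasDerivAt_inv hu).const_mul (1 / 2))).mul ((hJd u).pow 2)
    have h4 := (h1.add h2).add h3
    refine (h4.congr_deriv ?_).congr_of_eventuallyEq (Eventually.of_forall fun v => ?_)
    · simp only [id, Pi.pow_apply, Pi.add_apply]
      field_simp
      ring
    · simp only [hE, Pi.add_apply, Pi.mul_apply, Pi.pow_apply, id]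
      congr 2
      rw [one_div, mul_inv]
      ring
  have hanti : AntitoneOn E (Set.Ici 1) := by
    refine antitoneOn_of_deriv_nonpos (convex_Ici 1)
      (fun u hu => (hEd u (by have : (1 : ℝ) ≤ u := hu; positivity)).continuousAt.continuousWithinAt)
      (fun u hu => ?_) fun u hu => ?_
    all_goals
      rw [interior_Ici] at hu
      have hu' : u ≠ 0 := (zero_lt_one.trans hu).ne'
    · exact (hEd u hu').differentiableAt.differentiableWithinAt
    · rw [(hEd u hu').deriv]
      exact neg_nonpos.2 (by positivity)
  refine ⟨E 1, fun u hu => ?_⟩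
  have h0 : 0 < u := by linarith
  refine le_trans ?_ (hanti (Set.mem_Ici.2 le_rfl) hu hu)
  rw [besselJ0_eq]
  have : E u - u * J u ^ 2 = u * (J' u + J u / (2 * u)) ^ 2 + J u ^ 2 / (4 * u) := by
    simp only [hE]
    field_simp
    ring
  have : 0 ≤ u * (J' u + J u / (2 * u)) ^ 2 + J u ^ 2 / (4 * u) := by positivity
  change u * J u ^ 2 ≤ E u
  linarith

/-- `|J₀(2√y)|` is bounded by a constant times `min 1 y^(-1/4)`. -/
lemma exists_abs_besselEntire_le : ∃ C : ℝ, 0 < C ∧ ∀ y : ℝ, 0 < y →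
    |besselEntire 0 y| ≤ C ∧ |besselEntire 0 y| ≤ C * y ^ (-(1 / 4) : ℝ) := by
  obtain ⟨A, hA⟩ := exists_mul_besselJ0_sq_le
  obtain ⟨B, hB⟩ := isCompact_Icc.exists_bound_of_continuousOn (s := Set.Icc (0 : ℝ) 1)
    (continuous_besselEntire 0).continuousOn
  set C := max 1 (max A B)
  have hC : 1 ≤ C := le_max_left _ _
  have hlarge (y : ℝ) (hy : 1 ≤ y) : |besselEntire 0 y| ≤ C * y ^ (-(1 / 4) : ℝ) := by
    have hy0 : 0 < y := by linarith
    have hs : 1 ≤ Real.sqrt y := Real.one_le_sqrt.2 hy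
    have h := hA (2 * Real.sqrt y) (by linarith)
    rw [besselJ0_two_mul_sqrt hy0.le] at h
    have hp : Real.sqrt y * (y ^ (-(1 / 4) : ℝ)) ^ 2 = 1 := by
      rw [Real.sqrt_eq_rpow, ← Real.rpow_natCast, ← Real.rpow_mul hy0.le, ← Real.rpow_add hy0]
      norm_num
    refine abs_le_of_sq_le_sq ?_ (by positivity)
    have hAC : A ≤ C := (le_max_left _ _).trans (le_max_right _ _)
    have h2 : Real.sqrt y * besselEntire 0 y ^ 2 ≤ Real.sqrt y * (C * y ^ (-(1 / 4) : ℝ)) ^ 2 := by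
      rw [mul_pow, mul_left_comm, hp]
      nlinarith [sq_nonneg (besselEntire 0 y)]
    exact le_of_mul_le_mul_left h2 (by linarith)
  have hsmall (y : ℝ) (h0 : 0 < y) (hy : y ≤ 1) : |besselEntire 0 y| ≤ C :=
    (hB y ⟨h0.le, hy⟩).trans ((le_max_right _ _).trans (le_max_right _ _))
  refine ⟨C, by linarith, fun y hy => ?_⟩
  rcases le_total y 1 with h | h
  · refine ⟨hsmall y hy h, (hsmall y hy h).trans (le_mul_of_one_le_right (by linarith) ?_)⟩
    exact Real.one_le_rpow_of_pos_of_le_one_of_nonpos hy h (by norm_num)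
  · refine ⟨(hlarge y h).trans (mul_le_of_le_one_right (by linarith) ?_), hlarge y h⟩
    exact Real.rpow_le_one_of_one_le_of_nonpos h (by norm_num)

lemma integrableOn_rpow_mul_exp_neg_mul {a r : ℝ} (ha : 0 < a) (hr : 0 < r) :
    IntegrableOn (fun t : ℝ => t ^ (a - 1) * Real.exp (-(r * t))) (Set.Ioi 0) := by
  refine Integrable.of_integral_ne_zero ?_
  rw [Real.integral_rpow_mul_exp_neg_mul_Ioi ha hr]
  have := Real.Gamma_pos_of_pos ha
  positivity

lemma integrableOn_pow_mul_exp_neg_mul (m : ℕ) {r : ℝ} (hr : 0 < r) :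
    IntegrableOn (fun t : ℝ => t ^ m * Real.exp (-(r * t))) (Set.Ioi 0) := by
  have := integrableOn_rpow_mul_exp_neg_mul (a := m + 1) (by positivity) hr
  simpa using this

lemma integral_pow_mul_exp_neg_mul (m : ℕ) {r : ℝ} (hr : 0 < r) :
    ∫ t in Set.Ioi (0 : ℝ), t ^ m * Real.exp (-(r * t)) = (m.factorial : ℝ) / r ^ (m + 1) := by
  have := Real.integral_rpow_mul_exp_neg_mul_Ioi (a := m + 1) (by positivity) hr
  rw [Real.Gamma_nat_eq_factorial, ← Nat.cast_succ, Real.rpow_natCast] at this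
  simp only [Nat.cast_succ, add_sub_cancel_right, Real.rpow_natCast] at this
  rw [this, Nat.succ_eq_add_one, one_div, inv_pow]
  ring

lemma integral_besselEntire_mul_exp {p : ℝ} (hp : 0 < p) :
    ∫ y in Set.Ioi (0 : ℝ), besselEntire 0 y * Real.exp (-(p * y)) =
      p⁻¹ * Real.exp (-p⁻¹) := by
  set F : ℕ → ℝ → ℝ := fun m y =>
    (-1 : ℝ) ^ m / ((m.factorial : ℝ) * (m.factorial : ℝ)) * (y ^ m * Real.exp (-(p * y))) with hF
  have hint (m : ℕ) : IntegrableOn (F m) (Set.Ioi 0) :=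
    (integrableOn_pow_mul_exp_neg_mul m hp).const_mul _
  have hval (m : ℕ) : ∫ y in Set.Ioi (0 : ℝ), F m y = p⁻¹ * ((-p⁻¹) ^ m / m.factorial) := by
    have hm : (m.factorial : ℝ) ≠ 0 := by exact_mod_cast (Nat.factorial_pos _).ne'
    rw [hF, integral_const_mul, integral_pow_mul_exp_neg_mul m hp, neg_pow (p⁻¹) m, inv_pow]
    field_simp
    ring
  have hnorm (m : ℕ) : ∫ y in Set.Ioi (0 : ℝ), ‖F m y‖ = p⁻¹ * ((p⁻¹) ^ m / m.factorial) := by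
    have hm : (m.factorial : ℝ) ≠ 0 := by exact_mod_cast (Nat.factorial_pos _).ne'
    have : Set.EqOn (fun y => ‖F m y‖)
        (fun y => 1 / ((m.factorial : ℝ) * (m.factorial : ℝ)) * (y ^ m * Real.exp (-(p * y))))
        (Set.Ioi 0) := by
      intro y hy
      have hy' : 0 < y := hy
      simp only [hF, norm_mul, norm_div, norm_pow, norm_neg, norm_one, one_pow]
      rw [Real.norm_of_nonneg hy'.le, Real.norm_of_nonneg (Real.exp_pos _).le,
        Real.norm_of_nonneg (Nat.cast_nonneg _)]
    rw [setIntegral_congr_fun measurableSet_Ioi this, integral_const_mul,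
      integral_pow_mul_exp_neg_mul m hp, inv_pow]
    field_simp
    ring
  have key := hasSum_integral_of_summable_integral_norm hint (by
    simp only [hnorm]
    exact (Real.summable_pow_div_factorial p⁻¹).mul_left _)
  simp only [hval] at key
  have h2 : HasSum (fun m : ℕ => p⁻¹ * ((-p⁻¹) ^ m / m.factorial)) (p⁻¹ * Real.exp (-p⁻¹)) := by
    rw [Real.exp_eq_exp_ℝ]
    exact (NormedSpace.expSeries_div_hasSum_exp (-p⁻¹)).mul_left _
  rw [← key.unique h2]
  refine integral_congr_ae (Eventually.of_forall fun y => ?_)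
  simp only [hF, besselEntire, ← tsum_mul_right]
  refine tsum_congr fun m => ?_
  rw [add_zero]
  ring

lemma mellinConvergent_besselEntire {s : ℂ} (h1 : 0 < s.re) (h2 : s.re < 1 / 4) :
    MellinConvergent (fun y : ℝ => (besselEntire 0 y : ℂ)) s := by
  obtain ⟨C, hC, hb⟩ := exists_abs_besselEntire_le
  refine mellinConvergent_of_isBigO_rpow (a := 1 / 4) (b := 0) ?_ ?_ h2 ?_ h1
  · exact (Complex.continuous_ofReal.comp (continuous_besselEntire 0)).locallyIntegrable
      |>.locallyIntegrableOn _
  · refine IsBigO.of_bound C ?_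
    filter_upwards [eventually_gt_atTop 0] with y hy
    rw [Complex.norm_real, Real.norm_eq_abs, Real.norm_of_nonneg (by positivity)]
    exact (hb y hy).2
  · refine IsBigO.of_bound C ?_
    filter_upwards [self_mem_nhdsWithin] with y hy
    simpa using (hb y hy).1

/-- The Mellin transform of `J₀(2√y)`. -/
lemma mellin_besselEntire {s : ℂ} (h1 : 0 < s.re) (h2 : s.re < 1 / 4) :
    mellin (fun y : ℝ => (besselEntire 0 y : ℂ)) s = Complex.Gamma s / Complex.Gamma (1 - s) := by
  have hs1 : 0 < (1 - s).re := by
    rw [Complex.sub_re, Complex.one_re]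
    linarith
  set F : ℝ → ℝ → ℂ := fun y p =>
    (besselEntire 0 y : ℂ) * ((p : ℂ) ^ ((1 - s) - 1) * Complex.exp (-(y * p))) with hF
  have hGi (y : ℝ) (hy : 0 < y) : IntegrableOn
      (fun p : ℝ => (p : ℂ) ^ ((1 - s) - 1) * Complex.exp (-(y * p))) (Set.Ioi 0) := by
    refine Integrable.of_integral_ne_zero ?_
    rw [Complex.integral_cpow_mul_exp_neg_mul_Ioi hs1 hy]
    refine mul_ne_zero ?_ (Complex.Gamma_ne_zero_of_re_pos hs1)
    rw [Complex.cpow_ne_zero_iff]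
    left
    simpa using hy.ne'
  have hinner1 (y : ℝ) (hy : 0 < y) : ∫ p in Set.Ioi (0 : ℝ), F y p =
      Complex.Gamma (1 - s) * ((y : ℂ) ^ (s - 1) • (besselEntire 0 y : ℂ)) := by
    rw [hF, integral_const_mul, Complex.integral_cpow_mul_exp_neg_mul_Ioi hs1 hy, one_div,
      Complex.inv_cpow _ _ (by rw [Complex.arg_ofReal_of_nonneg hy.le]; exact Real.pi_pos.ne),
      ← Complex.cpow_neg, neg_sub, smul_eq_mul]
    ring
  have hinner2 (p : ℝ) (hp : 0 < p) : ∫ y in Set.Ioi (0 : ℝ), F y p =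
      (p : ℂ) ^ (-s - 1) • (Real.exp (-p⁻¹) : ℂ) := by
    have := integral_besselEntire_mul_exp hp
    have hp' : (p : ℂ) ≠ 0 := by exact_mod_cast hp.ne'
    calc ∫ y in Set.Ioi (0 : ℝ), F y p = ∫ y in Set.Ioi (0 : ℝ), (p : ℂ) ^ (-s) *
          ((besselEntire 0 y * Real.exp (-(p * y)) : ℝ) : ℂ) := by
          refine integral_congr_ae (Eventually.of_forall fun y => ?_)
          simp only [hF]
          rw [show 1 - s - 1 = -s by ring, mul_comm (y : ℂ)]
          push_cast
          ring
      _ = _ := by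
          rw [integral_const_mul, integral_complex_ofReal, this, Complex.cpow_sub _ _ hp',
            Complex.cpow_one, smul_eq_mul]
          push_cast
          field_simp
  have hint : Integrable (Function.uncurry F)
      ((volume.restrict (Set.Ioi 0)).prod (volume.restrict (Set.Ioi 0))) := by
    have hmeas : AEStronglyMeasurable (Function.uncurry F)
        ((volume.restrict (Set.Ioi 0)).prod (volume.restrict (Set.Ioi 0))) := by
      rw [Measure.prod_restrict]
      refine ContinuousOn.aestronglyMeasurable ?_ (measurableSet_Ioi.prod measurableSet_Ioi)
      have hc := continuous_besselEntire 0
      refine ContinuousOn.mul (by fun_prop) (ContinuousOn.mul ?_ (by fun_prop))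
      intro q hq
      refine ContinuousAt.continuousWithinAt ?_
      refine ContinuousAt.comp (f := fun q : ℝ × ℝ => q.2)
        (g := fun p : ℝ => (p : ℂ) ^ (1 - s - 1)) ?_ continuousAt_snd
      exact Complex.continuousAt_ofReal_cpow_const _ _ (Or.inr (ne_of_gt hq.2))
    rw [integrable_prod_iff hmeas]
    constructor
    · filter_upwards [ae_restrict_mem measurableSet_Ioi] with y hy
      simp only [Function.uncurry_apply_pair, hF]
      exact (hGi y hy).const_mul _
    · have hσ : 0 < 1 - s.re := by linarith
      have hb := (mellinConvergent_besselEntire h1 h2).norm.const_mul (Real.Gamma (1 - s.re))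
      refine hb.congr ?_
      filter_upwards [ae_restrict_mem measurableSet_Ioi] with y hy
      have hy' : 0 < y := hy
      have : Set.EqOn (fun p => ‖F y p‖) (fun p => |besselEntire 0 y| *
          (p ^ ((1 - s.re) - 1) * Real.exp (-(y * p)))) (Set.Ioi 0) := by
        intro p hp
        simp only [hF, norm_mul, Complex.norm_real, Real.norm_eq_abs, Complex.norm_exp]
        rw [Complex.norm_cpow_eq_rpow_re_of_pos hp]
        simp
      simp only [Function.uncurry_apply_pair]
      rw [setIntegral_congr_fun measurableSet_Ioi this, integral_const_mul,
        Real.integral_rpow_mul_exp_neg_mul_Ioi hσ hy', norm_smul,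
        Complex.norm_cpow_eq_rpow_re_of_pos hy', Complex.norm_real, Real.norm_eq_abs, one_div,
        Real.inv_rpow hy'.le, ← Real.rpow_neg hy'.le, neg_sub, Complex.sub_re, Complex.one_re]
      ring
  have hswap := integral_integral_swap hint
  rw [setIntegral_congr_fun measurableSet_Ioi hinner1, integral_const_mul,
    setIntegral_congr_fun measurableSet_Ioi hinner2] at hswap
  have hΓ : mellin (fun p : ℝ => ((Real.exp (-p⁻¹) : ℝ) : ℂ)) (-s) = Complex.Gamma s := by
    rw [mellin_comp_inv (fun p : ℝ => ((Real.exp (-p) : ℝ) : ℂ)), neg_neg,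
      ← Complex.GammaIntegral_eq_mellin, Complex.Gamma_eq_integral h1]
  rw [eq_div_iff (Complex.Gamma_ne_zero_of_re_pos hs1), mul_comm, ← hΓ]
  exact hswap

/-- `f` agrees on `[1, ∞)` with a polynomial in `log x`, up to an error `O(x^(-δ))`, `δ > 0`. -/
def IsPolyLog (f : ℝ → ℝ) : Prop :=
  ∃ Q : Polynomial ℝ, ∃ δ : ℝ, 0 < δ ∧ ∃ C : ℝ, ∀ x : ℝ, 1 ≤ x →
    |f x - Q.eval (Real.log x)| ≤ C * x ^ (-δ)

lemma exists_abs_eval_log_le (Q : Polynomial ℝ) {ε : ℝ} (hε : 0 < ε) :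
    ∃ C : ℝ, 0 ≤ C ∧ ∀ x : ℝ, 1 ≤ x → |Q.eval (Real.log x)| ≤ C * x ^ ε := by
  induction Q using Polynomial.induction_on' with
  | add p q hp hq =>
    obtain ⟨A, hA0, hA⟩ := hp
    obtain ⟨B, hB0, hB⟩ := hq
    refine ⟨A + B, by positivity, fun x hx => ?_⟩
    rw [Polynomial.eval_add, add_mul]
    exact (abs_add_le _ _).trans (add_le_add (hA x hx) (hB x hx))
  | monomial n a =>
    refine ⟨|a| * (n.factorial / ε ^ n), by positivity, fun x hx => ?_⟩
    have hl : 0 ≤ Real.log x := Real.log_nonneg hx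
    have h := Real.pow_div_factorial_le_exp (x := ε * Real.log x) (by positivity) n
    rw [mul_comm ε, ← Real.rpow_def_of_pos (by linarith)] at h
    rw [Polynomial.eval_monomial, abs_mul, abs_of_nonneg (pow_nonneg hl n), mul_assoc]
    refine mul_le_mul_of_nonneg_left ?_ (abs_nonneg a)
    have hn : (0 : ℝ) < n.factorial := by exact_mod_cast Nat.factorial_pos n
    rw [div_le_iff₀ hn, mul_pow] at h
    rw [div_mul_eq_mul_div, le_div_iff₀ (by positivity)]
    linarith

namespace IsPolyLog

variable {f g : ℝ → ℝ}

lemma congr (hf : IsPolyLog f) (h : ∀ x, 1 ≤ x → f x = g x) : IsPolyLog g := by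
  obtain ⟨Q, δ, hδ, C, hC⟩ := hf
  exact ⟨Q, δ, hδ, C, fun x hx => h x hx ▸ hC x hx⟩

lemma eval_log (Q : Polynomial ℝ) : IsPolyLog fun x => Q.eval (Real.log x) :=
  ⟨Q, 1, one_pos, 0, fun x _ => by simp⟩

lemma const (c : ℝ) : IsPolyLog fun _ => c := by
  simpa using eval_log (Polynomial.C c)

lemma log_pow (n : ℕ) : IsPolyLog fun x => Real.log x ^ n := by
  simpa using eval_log (Polynomial.X ^ n)

lemma of_abs_le {C δ : ℝ} (hδ : 0 < δ) (h : ∀ x, 1 ≤ x → |f x| ≤ C * x ^ (-δ)) : IsPolyLog f :=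
  ⟨0, δ, hδ, C, fun x hx => by simpa using h x hx⟩

lemma exists_abs_le (hf : IsPolyLog f) {ε : ℝ} (hε : 0 < ε) :
    ∃ C : ℝ, 0 ≤ C ∧ ∀ x : ℝ, 1 ≤ x → |f x| ≤ C * x ^ ε := by
  obtain ⟨Q, δ, hδ, C, hC⟩ := hf
  obtain ⟨A, hA0, hA⟩ := exists_abs_eval_log_le Q hε
  refine ⟨|C| + A, by positivity, fun x hx => ?_⟩
  have h1 : |f x| ≤ |f x - Q.eval (Real.log x)| + |Q.eval (Real.log x)| := by
    simpa using abs_add_le (f x - Q.eval (Real.log x)) (Q.eval (Real.log x))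
  have h2 : x ^ (-δ) ≤ x ^ ε := Real.rpow_le_rpow_of_exponent_le hx (by linarith)
  have h3 : C * x ^ (-δ) ≤ |C| * x ^ ε :=
    mul_le_mul (le_abs_self C) h2 (by positivity) (abs_nonneg C)
  linarith [hC x hx, hA x hx]

lemma of_abs_le_mul (hf : IsPolyLog f) {η : ℝ} (hη : 0 < η)
    (h : ∀ x, 1 ≤ x → |g x| ≤ |f x| * x ^ (-η)) : IsPolyLog g := by
  obtain ⟨A, hA0, hA⟩ := hf.exists_abs_le (half_pos hη)
  refine of_abs_le (C := A) (half_pos hη) fun x hx => ?_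
  have hx0 : 0 < x := by linarith
  calc |g x| ≤ A * x ^ (η / 2) * x ^ (-η) :=
        (h x hx).trans (mul_le_mul_of_nonneg_right (hA x hx) (by positivity))
    _ = A * x ^ (-(η / 2)) := by
        rw [mul_assoc, ← Real.rpow_add hx0]
        ring_nf

lemma add (hf : IsPolyLog f) (hg : IsPolyLog g) : IsPolyLog fun x => f x + g x := by
  obtain ⟨Q, δ, hδ, C, hC⟩ := hf
  obtain ⟨R, η, hη, D, hD⟩ := hg
  refine ⟨Q + R, min δ η, lt_min hδ hη, |C| + |D|, fun x hx => ?_⟩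
  have h1 : x ^ (-δ) ≤ x ^ (-min δ η) :=
    Real.rpow_le_rpow_of_exponent_le hx (neg_le_neg (min_le_left _ _))
  have h2 : x ^ (-η) ≤ x ^ (-min δ η) :=
    Real.rpow_le_rpow_of_exponent_le hx (neg_le_neg (min_le_right _ _))
  have h3 : C * x ^ (-δ) ≤ |C| * x ^ (-min δ η) :=
    mul_le_mul (le_abs_self C) h1 (by positivity) (abs_nonneg C)
  have h4 : D * x ^ (-η) ≤ |D| * x ^ (-min δ η) :=
    mul_le_mul (le_abs_self D) h2 (by positivity) (abs_nonneg D)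
  rw [Polynomial.eval_add, add_sub_add_comm]
  linarith [abs_add_le (f x - Q.eval (Real.log x)) (g x - R.eval (Real.log x)), hC x hx, hD x hx]

lemma const_mul (c : ℝ) (hf : IsPolyLog f) : IsPolyLog fun x => c * f x := by
  obtain ⟨Q, δ, hδ, C, hC⟩ := hf
  refine ⟨Polynomial.C c * Q, δ, hδ, |c| * C, fun x hx => ?_⟩
  rw [Polynomial.eval_mul, Polynomial.eval_C, ← mul_sub, abs_mul, mul_assoc]
  exact mul_le_mul_of_nonneg_left (hC x hx) (abs_nonneg c)

lemma sub (hf : IsPolyLog f) (hg : IsPolyLog g) : IsPolyLog fun x => f x - g x :=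
  (hf.add (hg.const_mul (-1))).congr fun x _ => by ring

lemma sum {ι : Type*} (t : Finset ι) {F : ι → ℝ → ℝ} (h : ∀ i ∈ t, IsPolyLog (F i)) :
    IsPolyLog fun x => ∑ i ∈ t, F i x := by
  classical
  induction t using Finset.induction_on with
  | empty => simpa using const 0
  | insert a t ha ih =>
    refine ((h a (mem_insert_self a t)).add
      (ih fun i hi => h i (mem_insert_of_mem hi))).congr fun x _ => ?_
    rw [sum_insert ha]

lemma mul (hf : IsPolyLog f) (hg : IsPolyLog g) : IsPolyLog fun x => f x * g x := by
  obtain ⟨Q, δ, hδ, C, hC⟩ := hf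
  have hg' := hg
  obtain ⟨R, η, hη, D, hD⟩ := hg
  have h1 : IsPolyLog fun x => (f x - Q.eval (Real.log x)) * g x := by
    refine (hg'.const_mul C).of_abs_le_mul hδ fun x hx => ?_
    have hx0 : 0 < x := by linarith
    rw [abs_mul, abs_mul]
    have := (hC x hx).trans (mul_le_mul_of_nonneg_right (le_abs_self C) (by positivity))
    calc _ ≤ |C| * x ^ (-δ) * |g x| := mul_le_mul_of_nonneg_right this (abs_nonneg _)
      _ = _ := by ring
  have h2 : IsPolyLog fun x => Q.eval (Real.log x) * (g x - R.eval (Real.log x)) := by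
    refine (eval_log (Q * Polynomial.C D)).of_abs_le_mul hη fun x hx => ?_
    have hx0 : 0 < x := by linarith
    rw [Polynomial.eval_mul, Polynomial.eval_C, abs_mul, abs_mul, mul_assoc]
    exact mul_le_mul_of_nonneg_left
      ((hD x hx).trans (mul_le_mul_of_nonneg_right (le_abs_self D) (by positivity))) (abs_nonneg _)
  refine ((h1.add h2).add (eval_log (Q * R))).congr fun x _ => ?_
  rw [Polynomial.eval_mul]
  ring

lemma comp_sqrt (hf : IsPolyLog f) : IsPolyLog fun x => f (Real.sqrt x) := by
  obtain ⟨Q, δ, hδ, C, hC⟩ := hf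
  refine ⟨Q.comp (Polynomial.C (1 / 2) * Polynomial.X), δ / 2, half_pos hδ, C, fun x hx => ?_⟩
  have h := hC (Real.sqrt x) (Real.one_le_sqrt.2 hx)
  have hx0 : 0 ≤ x := by linarith
  have hp : Real.sqrt x ^ (-δ) = x ^ (-(δ / 2)) := by
    rw [Real.sqrt_eq_rpow, ← Real.rpow_mul hx0]
    congr 1
    ring
  have hl : 1 / 2 * Real.log x = Real.log (Real.sqrt x) := by
    rw [Real.log_sqrt hx0]
    ring
  rw [Polynomial.eval_comp, Polynomial.eval_mul, Polynomial.eval_C, Polynomial.eval_X, hl, ← hp]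
  exact h

end IsPolyLog

lemma exists_derivative_eq (Q : Polynomial ℝ) : ∃ R : Polynomial ℝ, R.derivative = Q := by
  induction Q using Polynomial.induction_on' with
  | add p q hp hq =>
    obtain ⟨A, rfl⟩ := hp
    obtain ⟨B, rfl⟩ := hq
    exact ⟨A + B, Polynomial.derivative_add⟩
  | monomial n a =>
    refine ⟨Polynomial.monomial (n + 1) (a / (n + 1)), ?_⟩
    rw [Polynomial.derivative_monomial]
    have : (n : ℝ) + 1 ≠ 0 := by positivity
    simp [this]

lemma IsPolyLog.integral {f : ℝ → ℝ} (hf : IsPolyLog f) (hm : Measurable f) :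
    IsPolyLog fun x => ∫ u in Set.Ioc 1 x, f u / u := by
  obtain ⟨Q, δ, hδ, C, hC⟩ := hf
  obtain ⟨R, hR⟩ := exists_derivative_eq Q
  set e : ℝ → ℝ := fun u => (f u - Q.eval (Real.log u)) / u with he
  have hQm : Measurable fun u : ℝ => Q.eval (Real.log u) :=
    (Polynomial.continuous Q).measurable.comp Real.measurable_log
  have hem : Measurable e := (hm.sub hQm).div measurable_id
  have hpow (x : ℝ) (hx : 1 ≤ x) : IntegrableOn (fun u : ℝ => C * u ^ (-δ - 1)) (Set.Ioi x) :=
    (integrableOn_Ioi_rpow_of_lt (by linarith) (by linarith)).const_mul C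
  have hebd (u : ℝ) (hu : 1 ≤ u) : ‖e u‖ ≤ C * u ^ (-δ - 1) := by
    have hu0 : 0 < u := by linarith
    rw [Real.norm_eq_abs, he, abs_div, abs_of_pos hu0, Real.rpow_sub hu0, Real.rpow_one,
      ← mul_div_assoc]
    exact div_le_div_of_nonneg_right (hC u hu) hu0.le
  have hei (x : ℝ) (hx : 1 ≤ x) : IntegrableOn e (Set.Ioi x) := by
    refine (hpow x hx).mono' hem.aestronglyMeasurable ?_
    filter_upwards [ae_restrict_mem measurableSet_Ioi] with u hu
    exact hebd u (hx.trans (le_of_lt hu))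
  have htail : IsPolyLog fun x => ∫ u in Set.Ioi x, e u := by
    refine IsPolyLog.of_abs_le (C := C / δ) hδ fun x hx => ?_
    rw [← Real.norm_eq_abs]
    refine (norm_integral_le_of_norm_le (hpow x hx) ?_).trans (le_of_eq ?_)
    · filter_upwards [ae_restrict_mem measurableSet_Ioi] with u hu
      exact hebd u (hx.trans (le_of_lt hu))
    · rw [integral_const_mul, integral_Ioi_rpow_of_lt (by linarith) (by linarith)]
      rw [show -δ - 1 + 1 = -δ by ring, neg_div_neg_eq]
      ring
  refine (((IsPolyLog.eval_log R).sub (IsPolyLog.const (R.eval 0))).add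
    ((IsPolyLog.const (∫ u in Set.Ioi 1, e u)).sub htail)).congr fun x hx => ?_
  have hd (u : ℝ) (hu : u ∈ Set.uIcc 1 x) : HasDerivAt (fun u => R.eval (Real.log u))
      (Q.eval (Real.log u) / u) u := by
    rw [Set.uIcc_of_le hx] at hu
    have hu0 : u ≠ 0 := by linarith [hu.1]
    have := (R.hasDerivAt (Real.log u)).comp u (Real.hasDerivAt_log hu0)
    rw [hR] at this
    exact this
  have hcont : ContinuousOn (fun u => Q.eval (Real.log u) / u) (Set.uIcc 1 x) := by
    rw [Set.uIcc_of_le hx]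
    have hne (u : ℝ) (hu : u ∈ Set.Icc 1 x) : u ≠ 0 := by linarith [hu.1]
    exact ((Polynomial.continuous Q).comp_continuousOn
      (Real.continuousOn_log.mono fun u hu => hne u hu)).div continuousOn_id hne
  have hmain := intervalIntegral.integral_eq_sub_of_hasDerivAt hd hcont.intervalIntegrable
  rw [intervalIntegral.integral_of_le hx, Real.log_one] at hmain
  have hsplit : ∫ u in Set.Ioi 1, e u = (∫ u in Set.Ioc 1 x, e u) + ∫ u in Set.Ioi x, e u := by
    rw [← Set.Ioc_union_Ioi_eq_Ioi hx]
    exact setIntegral_union (Set.Ioc_disjoint_Ioi le_rfl) measurableSet_Ioi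
      ((hei 1 le_rfl).mono_set Set.Ioc_subset_Ioi_self) (hei x hx)
  have hQi : IntegrableOn (fun u => Q.eval (Real.log u) / u) (Set.Ioc 1 x) := by
    rw [← intervalIntegrable_iff_integrableOn_Ioc_of_le hx]
    exact hcont.intervalIntegrable
  have hadd : ∫ u in Set.Ioc 1 x, f u / u =
      (∫ u in Set.Ioc 1 x, Q.eval (Real.log u) / u) + ∫ u in Set.Ioc 1 x, e u := by
    rw [← integral_add hQi ((hei 1 le_rfl).mono_set Set.Ioc_subset_Ioi_self)]
    refine integral_congr_ae (Eventually.of_forall fun u => ?_)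
    simp only [he]
    ring
  rw [hadd, hmain, hsplit]
  ring

/-- The summatory function `x ↦ ∑_{1 ≤ n ≤ x} a n`. -/
noncomputable def summatory (a : ℕ → ℝ) (x : ℝ) : ℝ := ∑ n ∈ Finset.Icc 1 ⌊x⌋₊, a n

lemma measurable_summatory (a : ℕ → ℝ) : Measurable (summatory a) :=
  (measurable_from_nat (f := fun N : ℕ => ∑ n ∈ Finset.Icc 1 N, a n)).comp Nat.measurable_floor

/-- The Dirichlet hyperbola method. -/
lemma summatory_mul (f g : ArithmeticFunction ℝ) {x : ℝ} (hx : 0 ≤ x) :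
    summatory ⇑(f * g : ArithmeticFunction ℝ) x =
      (∑ n ∈ Finset.Icc 1 ⌊Real.sqrt x⌋₊, f n * summatory g (x / n)) +
      (∑ n ∈ Finset.Icc 1 ⌊Real.sqrt x⌋₊, g n * summatory f (x / n)) -
      summatory f (Real.sqrt x) * summatory g (Real.sqrt x) := by
  have hIcc (n : ℕ) : Finset.Icc 1 n = Finset.Ioc 0 n := rfl
  simp only [summatory, hIcc, Nat.floor_div_natCast]
  set N := ⌊x⌋₊ with hN
  set M := ⌊Real.sqrt x⌋₊ with hM
  have hMN : M * M ≤ N := by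
    refine Nat.le_floor ?_
    have := Nat.floor_le (Real.sqrt_nonneg x)
    push_cast
    nlinarith [Real.mul_self_sqrt hx, Real.sqrt_nonneg x, (Nat.cast_nonneg M : (0 : ℝ) ≤ M)]
  have hNM : N < (M + 1) * (M + 1) := by
    have h1 : Real.sqrt x < M + 1 := Nat.lt_floor_add_one _
    have h2 : (N : ℝ) ≤ x := Nat.floor_le hx
    have : (N : ℝ) < ((M + 1) * (M + 1) : ℕ) := by
      push_cast
      nlinarith [Real.mul_self_sqrt hx, Real.sqrt_nonneg x]
    exact_mod_cast this
  have hMleN : M ≤ N := by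
    rcases Nat.eq_zero_or_pos M with h | h
    · omega
    · nlinarith
  have hrow (u v : ℕ → ℝ) : ∑ n ∈ Finset.Ioc 0 M, u n * ∑ m ∈ Finset.Ioc 0 (N / n), v m =
      ∑ a ∈ Finset.Ioc 0 N, ∑ b ∈ Finset.Ioc 0 N,
        if a * b ≤ N ∧ a ≤ M then u a * v b else 0 := by
    rw [← Finset.sum_subset (Finset.Ioc_subset_Ioc_right hMleN)]
    · refine Finset.sum_congr rfl fun n hn => ?_
      rw [Finset.mem_Ioc] at hn
      rw [Finset.mul_sum, ← Finset.sum_filter]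
      refine Finset.sum_congr ?_ fun _ _ => rfl
      ext m
      simp only [Finset.mem_filter, Finset.mem_Ioc, Nat.le_div_iff_mul_le hn.1]
      constructor
      · rintro ⟨h1, h2⟩
        exact ⟨⟨h1, by nlinarith⟩, by linarith, hn.2⟩
      · rintro ⟨⟨h1, _⟩, h2, _⟩
        exact ⟨h1, by linarith⟩
    · intro a ha ha'
      refine Finset.sum_eq_zero fun b _ => if_neg ?_
      simp only [Finset.mem_Ioc] at ha ha'
      omega
  have hsq : (∑ n ∈ Finset.Ioc 0 M, f n) * ∑ n ∈ Finset.Ioc 0 M, g n =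
      ∑ a ∈ Finset.Ioc 0 N, ∑ b ∈ Finset.Ioc 0 N,
        if a ≤ M ∧ b ≤ M then f a * g b else 0 := by
    have hfil : (Finset.Ioc 0 N).filter (· ≤ M) = Finset.Ioc 0 M := by
      ext m
      simp only [Finset.mem_filter, Finset.mem_Ioc]
      omega
    rw [← hfil, Finset.sum_filter, Finset.sum_filter, Finset.sum_mul_sum]
    refine Finset.sum_congr rfl fun a _ => Finset.sum_congr rfl fun b _ => ?_
    by_cases h1 : a ≤ M <;> by_cases h2 : b ≤ M <;> simp [h1, h2]
  have hcol : ∑ n ∈ Finset.Ioc 0 M, g n * ∑ m ∈ Finset.Ioc 0 (N / n), f m =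
      ∑ a ∈ Finset.Ioc 0 N, ∑ b ∈ Finset.Ioc 0 N,
        if a * b ≤ N ∧ b ≤ M then f a * g b else 0 := by
    rw [hrow g f, Finset.sum_comm]
    refine Finset.sum_congr rfl fun a _ => Finset.sum_congr rfl fun b _ => ?_
    rw [mul_comm b a, mul_comm (g b)]
  rw [ArithmeticFunction.sum_Ioc_mul_eq_sum_prod_filter, Finset.sum_filter, Finset.sum_product,
    hrow f g, hcol, hsq, ← Finset.sum_add_distrib, ← Finset.sum_sub_distrib]
  refine Finset.sum_congr rfl fun a _ => ?_
  rw [← Finset.sum_add_distrib, ← Finset.sum_sub_distrib]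
  refine Finset.sum_congr rfl fun b _ => ?_
  by_cases h1 : a ≤ M <;> by_cases h2 : b ≤ M
  · have h3 : a * b ≤ N := (Nat.mul_le_mul h1 h2).trans hMN
    simp [h1, h2, h3]
  · simp [h1, h2]
  · simp [h1, h2]
  · have h3 : ¬ a * b ≤ N := by
      have := Nat.mul_le_mul (show M + 1 ≤ a by omega) (show M + 1 ≤ b by omega)
      omega
    simp [h1, h2, h3]

lemma summatory_mul_eq_sub_integral (a : ℕ → ℝ) {h h' : ℝ → ℝ} {x : ℝ}
    (hd : ∀ u, 1 ≤ u → HasDerivAt h (h' u) u) (hc : ContinuousOn h' (Set.Ici 1)) :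
    summatory (fun n => a n * h n) x =
      h x * summatory a x - ∫ u in Set.Ioc 1 x, h' u * summatory a u := by
  set c : ℕ → ℝ := fun n => if n = 0 then 0 else a n with hcdef
  have hsum (b : ℕ → ℝ) (hb : b 0 = 0) (N : ℕ) :
      ∑ n ∈ Finset.Icc 0 N, b n = ∑ n ∈ Finset.Icc 1 N, b n := by
    rw [Finset.Icc_eq_cons_Ioc (Nat.zero_le _), Finset.sum_cons, hb, zero_add]
    rfl
  have hca (N : ℕ) : ∑ n ∈ Finset.Icc 0 N, c n = ∑ n ∈ Finset.Icc 1 N, a n := by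
    rw [hsum c (by simp [hcdef])]
    refine Finset.sum_congr rfl fun n hn => if_neg ?_
    rw [Finset.mem_Icc] at hn
    omega
  have hderiv : Set.EqOn h' (deriv h) (Set.Icc 1 x) := fun u hu => (hd u hu.1).deriv.symm
  have key := sum_mul_eq_sub_integral_mul₀ c (f := h) (by simp [hcdef]) x
    (fun u hu => (hd u hu.1).differentiableAt)
    (((hc.mono Set.Icc_subset_Ici_self).integrableOn_Icc).congr_fun hderiv measurableSet_Icc)
  simp only [hca] at key
  rw [hsum (fun n => h n * c n) (by simp [hcdef])] at key
  calc summatory (fun n => a n * h n) x = ∑ n ∈ Finset.Icc 1 ⌊x⌋₊, h n * c n := by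
        refine Finset.sum_congr rfl fun n hn => ?_
        rw [Finset.mem_Icc] at hn
        simp only [hcdef, if_neg (show n ≠ 0 by omega)]
        ring
    _ = _ := by
        rw [key]
        congr 1
        refine setIntegral_congr_fun measurableSet_Ioc fun u hu => ?_
        rw [hderiv ⟨hu.1.le, hu.2⟩]
        rfl

lemma isPolyLog_summatory_div {a : ℕ → ℝ} (ha : IsPolyLog fun x => summatory a x / x) :
    IsPolyLog (summatory fun n => a n / n) := by
  refine (ha.add (ha.integral ((measurable_summatory a).div measurable_id))).congr fun x hx => ?_
  have h := summatory_mul_eq_sub_integral a (h := fun u => u⁻¹) (h' := fun u => -(u ^ 2)⁻¹) (x := x)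
    (fun u hu => hasDerivAt_inv (by linarith)) (by
      refine (ContinuousOn.inv₀ (by fun_prop) fun u hu => ?_).neg
      have : (1 : ℝ) ≤ u := hu
      positivity)
  simp only [div_eq_mul_inv] at h ⊢
  rw [h, mul_comm, sub_eq_add_neg, ← integral_neg]
  congr 1
  refine integral_congr_ae (Eventually.of_forall fun u => ?_)
  simp only [sq, mul_inv]
  ring

lemma isPolyLog_summatory_mul_log_pow {b : ℕ → ℝ} (hb : IsPolyLog (summatory b)) (i : ℕ) :
    IsPolyLog (summatory fun n => b n * Real.log n ^ i) := by
  have hi : IsPolyLog fun u => i * (Real.log u ^ (i - 1) * summatory b u) :=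
    ((IsPolyLog.log_pow (i - 1)).mul hb).const_mul i
  refine (((IsPolyLog.log_pow i).mul hb).sub (hi.integral (measurable_const.mul
    ((Real.measurable_log.pow_const _).mul (measurable_summatory b))))).congr fun x hx => ?_
  have h := summatory_mul_eq_sub_integral b (h := fun u => Real.log u ^ i)
    (h' := fun u => i * Real.log u ^ (i - 1) * u⁻¹) (x := x)
    (fun u hu => (Real.hasDerivAt_log (by linarith)).pow i) (by
      have hne (u : ℝ) (hu : u ∈ Set.Ici (1 : ℝ)) : u ≠ 0 := by
        have : (1 : ℝ) ≤ u := hu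
        positivity
      exact (continuousOn_const.mul ((Real.continuousOn_log.mono hne).pow _)).mul
        (continuousOn_id.inv₀ hne))
  rw [h]
  congr 1
  refine integral_congr_ae (Eventually.of_forall fun u => ?_)
  simp only
  ring

lemma isPolyLog_sum_eval_log_div {b : ℕ → ℝ} (hb : IsPolyLog (summatory b)) (Q : Polynomial ℝ) :
    IsPolyLog fun x => ∑ n ∈ Finset.Icc 1 ⌊Real.sqrt x⌋₊, b n * Q.eval (Real.log (x / n)) := by
  induction Q using Polynomial.induction_on' with
  | add p q hp hq =>
    refine (hp.add hq).congr fun x _ => ?_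
    simp only [Polynomial.eval_add, mul_add, Finset.sum_add_distrib]
  | monomial i c =>
    have hterm (m : ℕ) : IsPolyLog fun x => (c * (-1) ^ (i - m) * (i.choose m : ℝ)) *
        (Real.log x ^ m * summatory (fun n => b n * Real.log n ^ (i - m)) (Real.sqrt x)) :=
      ((IsPolyLog.log_pow m).mul (isPolyLog_summatory_mul_log_pow hb (i - m)).comp_sqrt).const_mul _
    refine (IsPolyLog.sum (Finset.range (i + 1)) fun m _ => hterm m).congr fun x hx => ?_
    simp only [summatory, Finset.mul_sum]
    rw [Finset.sum_comm]
    refine Finset.sum_congr rfl fun n hn => ?_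
    rw [Finset.mem_Icc] at hn
    have hn0 : (n : ℝ) ≠ 0 := by
      have : 0 < n := hn.1
      positivity
    rw [Polynomial.eval_monomial, Real.log_div (by linarith) hn0, sub_eq_add_neg, add_pow,
      Finset.mul_sum, Finset.mul_sum]
    refine Finset.sum_congr rfl fun m _ => ?_
    rw [neg_pow (Real.log n)]
    ring

lemma isPolyLog_floor_div : IsPolyLog fun x => (⌊x⌋₊ : ℝ) / x := by
  have h : IsPolyLog fun x : ℝ => (⌊x⌋₊ : ℝ) / x - 1 := by
    refine IsPolyLog.of_abs_le (C := 1) one_pos fun x hx => ?_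
    have hx0 : 0 < x := by linarith
    rw [Real.rpow_neg_one, one_mul, div_sub_one hx0.ne', abs_div, abs_of_pos hx0, ← one_div]
    refine div_le_div_of_nonneg_right (abs_le.2 ⟨?_, ?_⟩) hx0.le
    · linarith [Nat.lt_floor_add_one x]
    · linarith [Nat.floor_le hx0.le]
  exact (h.add (IsPolyLog.const 1)).congr fun x _ => by ring

lemma summatory_zeta (x : ℝ) :
    summatory ((ArithmeticFunction.zeta : ArithmeticFunction ℕ) : ArithmeticFunction ℝ) x =
      ⌊x⌋₊ := by
  have : ∀ n ∈ Finset.Icc 1 ⌊x⌋₊,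
      ((ArithmeticFunction.zeta : ArithmeticFunction ℕ) : ArithmeticFunction ℝ) n = 1 := by
    intro n hn
    rw [Finset.mem_Icc] at hn
    simp [show n ≠ 0 by omega]
  rw [summatory, Finset.sum_congr rfl this]
  simp

lemma isPolyLog_summatory_zeta_mul {g : ArithmeticFunction ℝ} (hg0 : ∀ n, 0 ≤ g n)
    (hg : IsPolyLog fun x => summatory g x / x) :
    IsPolyLog fun x => summatory
      ⇑(((ArithmeticFunction.zeta : ArithmeticFunction ℕ) : ArithmeticFunction ℝ) * g) x / x := by
  have hinv : IsPolyLog (summatory fun n => 1 / (n : ℝ)) := by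
    refine isPolyLog_summatory_div (isPolyLog_floor_div.congr fun x _ => ?_)
    simp [summatory]
  have hgdiv := isPolyLog_summatory_div hg
  obtain ⟨Q, δ, hδ, C, hC⟩ := id hg
  have hT1 : IsPolyLog fun x => ∑ n ∈ Finset.Icc 1 ⌊Real.sqrt x⌋₊, summatory g (x / n) / x := by
    have herr : IsPolyLog fun x => ∑ n ∈ Finset.Icc 1 ⌊Real.sqrt x⌋₊,
        1 / (n : ℝ) * (summatory g (x / n) / (x / n) - Q.eval (Real.log (x / n))) := by
      refine (hinv.comp_sqrt.const_mul C).of_abs_le_mul (half_pos hδ) fun x hx => ?_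
      have hx0 : 0 < x := by linarith
      have hpos : 0 ≤ summatory (fun n => 1 / (n : ℝ)) (Real.sqrt x) :=
        Finset.sum_nonneg fun n _ => by positivity
      rw [abs_mul, abs_of_nonneg hpos]
      simp only [summatory] at hpos ⊢
      rw [Finset.mul_sum, Finset.sum_mul]
      refine (Finset.abs_sum_le_sum_abs _ _).trans (Finset.sum_le_sum fun n hn => ?_)
      rw [Finset.mem_Icc] at hn
      have hn0 : (0 : ℝ) < n := by exact_mod_cast hn.1
      have hnx : (n : ℝ) ≤ Real.sqrt x :=
        (Nat.cast_le.2 hn.2).trans (Nat.floor_le (Real.sqrt_nonneg x))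
      have hs : Real.sqrt x ≤ x / n := by
        rw [le_div_iff₀ hn0]
        calc Real.sqrt x * n ≤ Real.sqrt x * Real.sqrt x :=
              mul_le_mul_of_nonneg_left hnx (Real.sqrt_nonneg x)
          _ = x := Real.mul_self_sqrt hx0.le
      have hs1 : 1 ≤ Real.sqrt x := Real.one_le_sqrt.2 hx
      have hpow : (x / n) ^ (-δ) ≤ x ^ (-(δ / 2)) := by
        calc (x / n) ^ (-δ) ≤ Real.sqrt x ^ (-δ) :=
              Real.rpow_le_rpow_of_nonpos (by linarith) hs (by linarith)
          _ = x ^ (-(δ / 2)) := by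
              rw [Real.sqrt_eq_rpow, ← Real.rpow_mul hx0.le]
              congr 1
              ring
      have h := (hC (x / n) (hs1.trans hs)).trans
        ((mul_le_mul_of_nonneg_right (le_abs_self C) (by positivity)).trans
          (mul_le_mul_of_nonneg_left hpow (abs_nonneg C)))
      rw [abs_mul, abs_of_nonneg (by positivity : (0 : ℝ) ≤ 1 / n)]
      calc 1 / (n : ℝ) * _ ≤ 1 / (n : ℝ) * (|C| * x ^ (-(δ / 2))) :=
            mul_le_mul_of_nonneg_left h (by positivity)
        _ = _ := by ring
    refine ((isPolyLog_sum_eval_log_div hinv Q).add herr).congr fun x hx => ?_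
    rw [← Finset.sum_add_distrib]
    refine Finset.sum_congr rfl fun n hn => ?_
    rw [Finset.mem_Icc] at hn
    have hn0 : (0 : ℝ) < n := by exact_mod_cast hn.1
    have hx0 : 0 < x := by linarith
    field_simp
    ring
  have hT2 : IsPolyLog fun x => ∑ n ∈ Finset.Icc 1 ⌊Real.sqrt x⌋₊, g n * ⌊x / n⌋₊ / x := by
    have herr : IsPolyLog fun x => ∑ n ∈ Finset.Icc 1 ⌊Real.sqrt x⌋₊,
        g n * (x / n - ⌊x / n⌋₊) / x := by
      refine hg.comp_sqrt.of_abs_le_mul (η := 1 / 2) (by norm_num) fun x hx => ?_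
      have hx0 : 0 < x := by linarith
      have hpos : 0 ≤ summatory g (Real.sqrt x) := Finset.sum_nonneg fun n _ => hg0 n
      have hsx : x ^ (-(1 / 2) : ℝ) = (Real.sqrt x)⁻¹ := by
        rw [Real.rpow_neg hx0.le, Real.sqrt_eq_rpow]
      rw [abs_of_nonneg (div_nonneg hpos (Real.sqrt_nonneg x)), hsx, div_mul_eq_mul_div,
        mul_div_assoc, ← one_div, div_div, Real.mul_self_sqrt hx0.le, summatory, Finset.sum_mul]
      refine (Finset.abs_sum_le_sum_abs _ _).trans (Finset.sum_le_sum fun n hn => ?_)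
      have h1 : 0 ≤ x / n - ⌊x / n⌋₊ := sub_nonneg.2 (Nat.floor_le (by positivity))
      have h2 : x / n - ⌊x / n⌋₊ ≤ 1 := by linarith [Nat.lt_floor_add_one (x / n)]
      rw [abs_of_nonneg (div_nonneg (mul_nonneg (hg0 n) h1) hx0.le), mul_div_assoc]
      exact mul_le_mul_of_nonneg_left (div_le_div_of_nonneg_right h2 hx0.le) (hg0 n)
    refine (hgdiv.comp_sqrt.sub herr).congr fun x hx => ?_
    rw [summatory, ← Finset.sum_sub_distrib]
    refine Finset.sum_congr rfl fun n hn => ?_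
    rw [Finset.mem_Icc] at hn
    have hn0 : (0 : ℝ) < n := by exact_mod_cast hn.1
    have hx0 : 0 < x := by linarith
    field_simp
    ring
  have hT3 := isPolyLog_floor_div.comp_sqrt.mul hg.comp_sqrt
  refine ((hT1.add hT2).sub hT3).congr fun x hx => ?_
  have hx0 : 0 < x := by linarith
  rw [summatory_mul _ _ hx0.le]
  simp only [summatory_zeta]
  have hz : ∑ n ∈ Finset.Icc 1 ⌊Real.sqrt x⌋₊,
      ((ArithmeticFunction.zeta : ArithmeticFunction ℕ) : ArithmeticFunction ℝ) n *
        summatory g (x / n) = ∑ n ∈ Finset.Icc 1 ⌊Real.sqrt x⌋₊, summatory g (x / n) := by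
    refine Finset.sum_congr rfl fun n hn => ?_
    rw [Finset.mem_Icc] at hn
    simp [show n ≠ 0 by omega]
  rw [hz, ← Finset.sum_div, ← Finset.sum_div, div_mul_div_comm, Real.mul_self_sqrt hx0.le]
  ring

lemma isPolyLog_summatory_dk {k : ℕ} (hk : 0 < k) :
    IsPolyLog fun x => summatory (fun n => (dk k n : ℝ)) x / x := by
  induction k, hk using Nat.le_induction with
  | base =>
    refine isPolyLog_floor_div.congr fun x _ => ?_
    rw [← summatory_zeta]
    simp [summatory, dk]
  | succ k hk ih =>
    have h := isPolyLog_summatory_zeta_mul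
      (g := ((ArithmeticFunction.zeta ^ k : ArithmeticFunction ℕ) : ArithmeticFunction ℝ))
      (fun n => by simp) (ih.congr fun x _ => by simp [summatory, dk])
    refine h.congr fun x _ => ?_
    rw [← ArithmeticFunction.natCoe_mul, ← pow_succ']
    simp [summatory, dk]

lemma Real.exp_image_Ioi_zero : Real.exp '' Set.Ioi 0 = Set.Ioi 1 := by
  ext x
  constructor
  · rintro ⟨t, ht, rfl⟩
    exact Real.one_lt_exp_iff.2 ht
  · intro hx
    have hx' : (1 : ℝ) < x := hx
    exact ⟨Real.log x, Real.log_pos hx', Real.exp_log (by linarith)⟩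

lemma integrableOn_Ioi_one_iff_comp_exp {E : Type*} [NormedAddCommGroup E] [NormedSpace ℝ E]
    (f : ℝ → E) : IntegrableOn f (Set.Ioi 1) ↔
      IntegrableOn (fun t => Real.exp t • f (Real.exp t)) (Set.Ioi 0) := by
  rw [← Real.exp_image_Ioi_zero, integrableOn_image_iff_integrableOn_abs_deriv_smul
    measurableSet_Ioi (fun x _ => (Real.hasDerivAt_exp x).hasDerivWithinAt)
    Real.exp_injective.injOn]
  simp only [Real.abs_exp]

lemma integral_Ioi_one_eq_integral_comp_exp {E : Type*} [NormedAddCommGroup E] [NormedSpace ℝ E]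
    (f : ℝ → E) : ∫ x in Set.Ioi 1, f x = ∫ t in Set.Ioi 0, Real.exp t • f (Real.exp t) := by
  rw [← Real.exp_image_Ioi_zero, integral_image_eq_integral_abs_deriv_smul
    measurableSet_Ioi (fun x _ => (Real.hasDerivAt_exp x).hasDerivWithinAt)
    Real.exp_injective.injOn]
  simp only [Real.abs_exp]

lemma eq_zero_of_isBigO_sum_div_pow (r : ℕ → ℝ) (N : ℕ)
    (h : (fun w : ℝ => ∑ j ∈ Finset.range N, r j / w ^ (j + 1)) =O[𝓝[>] 0] fun _ => (1 : ℝ)) :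
    ∀ j < N, r j = 0 := by
  induction N with
  | zero => simp
  | succ N ih =>
    have hw : Tendsto (fun w : ℝ => w) (𝓝[>] 0) (𝓝 0) := tendsto_nhdsWithin_of_tendsto_nhds
      tendsto_id
    have hwpow : Tendsto (fun w : ℝ => w ^ (N + 1)) (𝓝[>] 0) (𝓝 0) := by
      simpa using hw.pow (N + 1)
    have h0 : Tendsto (fun w : ℝ => w ^ (N + 1) * ∑ j ∈ Finset.range (N + 1), r j / w ^ (j + 1))
        (𝓝[>] 0) (𝓝 0) := by
      refine IsBigO.trans_tendsto ((isBigO_refl (fun w : ℝ => w ^ (N + 1)) _).mul h) ?_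
      simpa using hwpow
    have h1 : Tendsto (fun w : ℝ => ∑ j ∈ Finset.range N, r j * w ^ (N - j) + r N)
        (𝓝[>] 0) (𝓝 (0 + r N)) := by
      refine Tendsto.add_const _ ?_
      have hs : Tendsto (fun w : ℝ => ∑ j ∈ Finset.range N, r j * w ^ (N - j)) (𝓝[>] 0)
          (𝓝 (∑ j ∈ Finset.range N, 0)) := by
        refine tendsto_finsetSum _ fun j hj => ?_
        rw [Finset.mem_range] at hj
        have := (hw.pow (N - j)).const_mul (r j)
        rwa [zero_pow (by omega), mul_zero] at this
      rwa [Finset.sum_const_zero] at hs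
    have hrN : r N = 0 := by
      rw [zero_add] at h1
      refine tendsto_nhds_unique (h1.congr' ?_) h0
      filter_upwards [self_mem_nhdsWithin] with w hw
      have hw0 : (0 : ℝ) < w := hw
      rw [Finset.sum_range_succ, mul_add, Finset.mul_sum]
      congr 1
      · refine Finset.sum_congr rfl fun j hj => ?_
        rw [Finset.mem_range] at hj
        have : w ^ (N + 1) = w ^ (N - j) * w ^ (j + 1) := by
          rw [← pow_add]
          congr 1
          omega
        rw [this]
        field_simp
      · field_simp
    have ih' := ih (h.congr_left fun w => by rw [Finset.sum_range_succ, hrN]; simp)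
    intro j hj
    rcases Nat.lt_succ_iff_lt_or_eq.1 hj with h | rfl
    · exact ih' j h
    · exact hrN

lemma one_add_mul_sum_alternating (b : ℕ → ℝ) (w : ℝ) (n : ℕ) :
    (1 + w) * ∑ m ∈ Finset.range (n + 1),
        ((-1) ^ m * ∑ i ∈ Finset.range (m + 1), (-1) ^ i * b i) * w ^ m =
      ∑ m ∈ Finset.range (n + 1), b m * w ^ m +
        ((-1) ^ n * ∑ i ∈ Finset.range (n + 1), (-1) ^ i * b i) * w ^ (n + 1) := by
  induction n with
  | zero => simp; ring
  | succ n ih =>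
    rw [Finset.sum_range_succ, mul_add, ih, Finset.sum_range_succ _ (n + 1),
      Finset.sum_range_succ _ (n + 1)]
    have h : ((-1 : ℝ) ^ (n + 1)) * (-1) ^ (n + 1) = 1 := by rw [← mul_pow]; simp
    have h2 : ((-1 : ℝ) ^ (n + 1)) = - (-1) ^ n := by ring
    linear_combination (b (n + 1) * w ^ (n + 1)) * h +
      (∑ i ∈ Finset.range (n + 1), (-1) ^ i * b i) * w ^ (n + 1) * h2

lemma analyticAt_zetaPowAux (k : ℕ) : AnalyticAt ℂ (zetaPowAux k) 1 := by
  refine analyticAt_of_differentiable_on_punctured_nhds_of_continuousAt ?_ ?_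
  · filter_upwards [self_mem_nhdsWithin] with s hs
    have hs' : s ≠ 1 := hs
    have hd : DifferentiableAt ℂ (fun s : ℂ => ((s - 1) * riemannZeta s) ^ k) s :=
      (((differentiableAt_id.sub_const 1).mul (differentiableAt_riemannZeta hs')).pow k)
    refine hd.congr_of_eventuallyEq ?_
    filter_upwards [isOpen_ne.mem_nhds hs'] with z hz
    exact Function.update_of_ne hz _ _
  · rw [zetaPowAux, continuousAt_update_same]
    simpa using riemannZeta_residue_one.pow k

lemma isBigO_zetaPowAux_re_sub (k : ℕ) :
    (fun w : ℝ => (((w : ℂ) * riemannZeta (1 + w)) ^ k).re -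
      ∑ i ∈ Finset.range k, lam k i / i.factorial * w ^ i) =O[𝓝[>] 0] fun w => w ^ k := by
  have h := (analyticAt_zetaPowAux k).hasFPowerSeriesAt.isBigO_sub_partialSum_pow k
  have ht : Tendsto (fun w : ℝ => (w : ℂ)) (𝓝[>] 0) (𝓝 0) :=
    tendsto_nhdsWithin_of_tendsto_nhds (Complex.continuous_ofReal.tendsto' 0 0 (by simp))
  have h2 := h.comp_tendsto ht
  refine IsBigO.trans (IsBigO.of_bound 1 ?_) (h2.trans (IsBigO.of_bound 1 ?_))
  · filter_upwards [self_mem_nhdsWithin] with w hw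
    have hw0 : (w : ℂ) ≠ 0 := by
      have : (0 : ℝ) < w := hw
      exact_mod_cast this.ne'
    rw [one_mul]
    refine le_trans (le_of_eq ?_) (Complex.abs_re_le_norm _)
    rw [Real.norm_eq_abs]
    congr 1
    simp only [Function.comp, Complex.sub_re, FormalMultilinearSeries.partialSum, Complex.re_sum]
    congr 1
    · rw [zetaPowAux, Function.update_of_ne (by simpa using hw0)]
      simp
    · refine Finset.sum_congr rfl fun i _ => ?_
      simp only [FormalMultilinearSeries.apply_eq_pow_smul_coeff,
        FormalMultilinearSeries.coeff_ofScalars, smul_eq_mul, lam]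
      rw [← Complex.ofReal_pow, Complex.re_ofReal_mul, Complex.div_natCast_re]
      ring
  · simp

lemma LSeries_dk {k : ℕ} (hk : 0 < k) {s : ℂ} (hs : 1 < s.re) :
    LSeriesSummable (fun n => (dk k n : ℂ)) s ∧
      LSeries (fun n => (dk k n : ℂ)) s = riemannZeta s ^ k := by
  have hζ : LSeriesSummable (fun n => (ArithmeticFunction.zeta n : ℂ)) s :=
    ArithmeticFunction.LSeriesSummable_zeta_iff.2 hs
  have hζs := ArithmeticFunction.LSeries_zeta_eq_riemannZeta hs
  induction k, hk using Nat.le_induction with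
  | base => simpa only [dk, zero_add, pow_one] using And.intro hζ hζs
  | succ k hk ih =>
    have heq : (fun n => (dk (k + 1) n : ℂ)) =
        fun n => (((ArithmeticFunction.zeta : ArithmeticFunction ℕ) : ArithmeticFunction ℂ) *
          ((ArithmeticFunction.zeta ^ k : ArithmeticFunction ℕ) : ArithmeticFunction ℂ)) n := by
      ext n
      rw [← ArithmeticFunction.natCoe_mul, ← pow_succ', ArithmeticFunction.natCoe_apply, dk]
    simp only [dk, ← ArithmeticFunction.natCoe_apply (R := ℂ)] at ih hζ hζs
    rw [heq]
    refine ⟨ArithmeticFunction.LSeriesSummable_mul hζ ih.1, ?_⟩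
    rw [ArithmeticFunction.LSeries_mul' hζ ih.1, pow_succ', ih.2, hζs]

lemma riemannZeta_pow_eq_integral {k : ℕ} (hk : 0 < k) {w : ℝ} (hw : 0 < w) :
    riemannZeta (1 + w) ^ k = (((1 + w) * ∫ t in Set.Ioi (0 : ℝ),
      summatory (fun n => (dk k n : ℝ)) (Real.exp t) / Real.exp t * Real.exp (-(w * t)) : ℝ) :
        ℂ) := by
  have hre : ((1 : ℂ) + w).re = 1 + w := by simp
  obtain ⟨C, hC0, hC⟩ := (isPolyLog_summatory_dk hk).exists_abs_le (half_pos hw)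
  have hO : (fun n : ℕ => ∑ m ∈ Finset.Icc 1 n, (dk k m : ℝ)) =O[atTop]
      fun n : ℕ => (n : ℝ) ^ (1 + w / 2) := by
    refine IsBigO.of_bound C ?_
    filter_upwards [eventually_ge_atTop 1] with n hn
    have hn1 : (1 : ℝ) ≤ n := by exact_mod_cast hn
    have hn0 : (0 : ℝ) < n := by linarith
    have h := hC n hn1
    rw [summatory, Nat.floor_natCast, abs_div, abs_of_pos hn0, div_le_iff₀ hn0] at h
    rw [Real.norm_eq_abs, Real.norm_eq_abs, abs_of_pos (by positivity : 0 < (n : ℝ) ^ (1 + w / 2)),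
      Real.rpow_add hn0, Real.rpow_one]
    linarith
  have h := LSeries_eq_mul_integral_of_nonneg (fun n => (dk k n : ℝ)) (by positivity)
    (s := 1 + w) (by rw [hre]; linarith) hO (fun n => by positivity)
  simp only [Complex.ofReal_natCast] at h
  rw [(LSeries_dk hk (by rw [hre]; linarith)).2] at h
  rw [h, integral_Ioi_one_eq_integral_comp_exp, Complex.ofReal_mul, ← integral_complex_ofReal]
  push_cast
  congr 1
  refine setIntegral_congr_fun measurableSet_Ioi fun t _ => ?_
  have he : ((Real.exp t : ℝ) : ℂ) ^ (-((1 : ℂ) + w + 1)) =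
      ((Real.exp (-(w * t)) / Real.exp t / Real.exp t : ℝ) : ℂ) := by
    have : (-((1 : ℂ) + w + 1)) = ((-(1 + w + 1) : ℝ) : ℂ) := by push_cast; ring
    rw [this, ← Complex.ofReal_cpow (Real.exp_pos t).le, ← Real.exp_mul, ← Real.exp_sub,
      ← Real.exp_sub]
    congr 2
    ring
  have hne : ((Real.exp t : ℝ) : ℂ) ≠ 0 := by exact_mod_cast (Real.exp_pos t).ne'
  rw [← Complex.ofReal_exp t, he, summatory, Complex.real_smul]
  push_cast at hne ⊢
  field_simp

lemma isBigO_integral_exp_sub_sum {f : ℝ → ℝ} (hm : Measurable f) {Q : Polynomial ℝ} {C δ : ℝ}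
    (hδ : 0 < δ) (h : ∀ x, 1 ≤ x → |f x - Q.eval (Real.log x)| ≤ C * x ^ (-δ)) {N : ℕ}
    (hN : Q.natDegree < N) :
    (fun w : ℝ => (∫ t in Set.Ioi (0 : ℝ), f (Real.exp t) * Real.exp (-(w * t))) -
      ∑ j ∈ Finset.range N, Q.coeff j * j.factorial / w ^ (j + 1)) =O[𝓝[>] 0]
        fun _ => (1 : ℝ) := by
  refine IsBigO.of_bound (C * (1 / δ)) ?_
  filter_upwards [self_mem_nhdsWithin] with w hw
  have hw0 : (0 : ℝ) < w := hw
  have hint (j : ℕ) : IntegrableOn (fun t : ℝ => Q.coeff j * (t ^ j * Real.exp (-(w * t))))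
      (Set.Ioi 0) := (integrableOn_pow_mul_exp_neg_mul j hw0).const_mul _
  have hQ : IntegrableOn (fun t : ℝ => Q.eval t * Real.exp (-(w * t))) (Set.Ioi 0) := by
    simp only [Polynomial.eval_eq_sum_range' hN, Finset.sum_mul, mul_assoc]
    exact integrable_finsetSum _ fun j _ => hint j
  have hQi : ∫ t in Set.Ioi (0 : ℝ), Q.eval t * Real.exp (-(w * t)) =
      ∑ j ∈ Finset.range N, Q.coeff j * j.factorial / w ^ (j + 1) := by
    simp only [Polynomial.eval_eq_sum_range' hN, Finset.sum_mul, mul_assoc]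
    rw [integral_finsetSum _ fun j _ => hint j]
    refine Finset.sum_congr rfl fun j _ => ?_
    rw [integral_const_mul, integral_pow_mul_exp_neg_mul j hw0, mul_div_assoc]
  have hexp : IntegrableOn (fun t : ℝ => C * Real.exp (-(δ * t))) (Set.Ioi 0) := by
    simpa [IntegrableOn] using (integrableOn_pow_mul_exp_neg_mul 0 hδ).const_mul C
  have hbound : ∀ t ∈ Set.Ioi (0 : ℝ),
      ‖(f (Real.exp t) - Q.eval t) * Real.exp (-(w * t))‖ ≤ C * Real.exp (-(δ * t)) := by
    intro t ht
    have ht0 : (0 : ℝ) < t := ht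
    have h1 := h (Real.exp t) (Real.one_le_exp ht0.le)
    rw [Real.log_exp, ← Real.exp_mul, mul_neg, mul_comm t] at h1
    rw [norm_mul, Real.norm_eq_abs, Real.norm_eq_abs, Real.abs_exp]
    refine le_trans (mul_le_of_le_one_right (abs_nonneg _) ?_) h1
    rw [Real.exp_le_one_iff]
    have := mul_pos hw0 ht0
    linarith
  have hE : IntegrableOn (fun t : ℝ => (f (Real.exp t) - Q.eval t) * Real.exp (-(w * t)))
      (Set.Ioi 0) := by
    refine Integrable.mono' hexp ?_ ((ae_restrict_iff' measurableSet_Ioi).2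
      (Eventually.of_forall hbound))
    exact (((hm.comp Real.measurable_exp).sub (Polynomial.continuous Q).measurable).mul
      (by fun_prop)).aestronglyMeasurable
  have hsplit : ∫ t in Set.Ioi (0 : ℝ), f (Real.exp t) * Real.exp (-(w * t)) =
      (∫ t in Set.Ioi (0 : ℝ), (f (Real.exp t) - Q.eval t) * Real.exp (-(w * t))) +
        ∑ j ∈ Finset.range N, Q.coeff j * j.factorial / w ^ (j + 1) := by
    rw [← hQi, ← integral_add hE hQ]
    refine integral_congr_ae (Eventually.of_forall fun t => ?_)
    simp only
    ring
  rw [hsplit, add_sub_cancel_right, norm_one, mul_one]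
  refine (norm_integral_le_of_norm_le hexp ((ae_restrict_iff' measurableSet_Ioi).2
      (Eventually.of_forall hbound))).trans (le_of_eq ?_)
  rw [integral_const_mul]
  have := integral_pow_mul_exp_neg_mul 0 hδ
  simp only [pow_zero, one_mul, zero_add, pow_one, Nat.factorial_zero, Nat.cast_one] at this
  rw [this]

lemma isBigO_integral_dk_sub_sum_aCoef {k : ℕ} (hk : 0 < k) :
    (fun w : ℝ => (∫ t in Set.Ioi (0 : ℝ),
      summatory (fun n => (dk k n : ℝ)) (Real.exp t) / Real.exp t * Real.exp (-(w * t))) -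
        ∑ j ∈ Finset.range k, aCoef k j / w ^ (j + 1)) =O[𝓝[>] 0] fun _ => (1 : ℝ) := by
  obtain ⟨n, rfl⟩ : ∃ n, k = n + 1 := ⟨k - 1, by omega⟩
  set k := n + 1 with hkdef
  set I : ℝ → ℝ := fun w => ∫ t in Set.Ioi (0 : ℝ),
      summatory (fun n => (dk k n : ℝ)) (Real.exp t) / Real.exp t * Real.exp (-(w * t)) with hI
  set c : ℕ → ℝ := fun m =>
    (-1) ^ m * ∑ i ∈ Finset.range (m + 1), (-1) ^ i * (lam k i / i.factorial) with hc
  have hac (j : ℕ) : aCoef k j = c (k - 1 - j) := by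
    simp only [aCoef, hc, mul_div_assoc]
  have hsum {w : ℝ} (hw : 0 < w) : ∑ j ∈ Finset.range k, aCoef k j / w ^ (j + 1) =
      (∑ m ∈ Finset.range k, c m * w ^ m) / w ^ k := by
    rw [← Finset.sum_range_reflect (fun m => c m * w ^ m), Finset.sum_div]
    refine Finset.sum_congr rfl fun j hj => ?_
    rw [Finset.mem_range] at hj
    have : w ^ k = w ^ (k - 1 - j) * w ^ (j + 1) := by
      rw [← pow_add]
      congr 1
      omega
    rw [hac, this]
    field_simp
  have h1 : (fun w : ℝ => w ^ k * ((1 + w) * I w) - (1 + w) * ∑ m ∈ Finset.range k, c m * w ^ m)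
      =O[𝓝[>] 0] fun w => w ^ k := by
    refine ((isBigO_zetaPowAux_re_sub k).sub ((isBigO_refl (fun w : ℝ => w ^ k)
      (𝓝[>] 0)).const_mul_left (c n))).congr' ?_ EventuallyEq.rfl
    filter_upwards [self_mem_nhdsWithin] with w hw
    rw [mul_pow, riemannZeta_pow_eq_integral hk hw, ← Complex.ofReal_pow, ← Complex.ofReal_mul,
      Complex.ofReal_re, one_add_mul_sum_alternating]
    ring
  have h2 : (fun w : ℝ => (1 + w)⁻¹ * (w ^ k)⁻¹) =O[𝓝[>] 0] fun w => (w ^ k)⁻¹ := by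
    refine IsBigO.of_bound 1 ?_
    filter_upwards [self_mem_nhdsWithin] with w hw
    have hw0 : (0 : ℝ) < w := hw
    rw [norm_mul, Real.norm_eq_abs, abs_of_pos (by positivity)]
    exact mul_le_mul_of_nonneg_right (inv_le_one_of_one_le₀ (by linarith)) (norm_nonneg _)
  refine (h2.mul h1).congr' ?_ ?_
  · filter_upwards [self_mem_nhdsWithin] with w hw
    have hw0 : (0 : ℝ) < w := hw
    rw [hsum hw0, ← congrFun hI w]
    field_simp
  · filter_upwards [self_mem_nhdsWithin] with w hw
    have hw0 : (0 : ℝ) < w := hw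
    exact inv_mul_cancel₀ (by positivity)

lemma exists_abs_Deltak_le {k : ℕ} (hk : 0 < k) :
    ∃ C δ : ℝ, 0 < δ ∧ ∀ x : ℝ, 1 ≤ x → |Deltak k x| ≤ C * (x * x ^ (-δ)) := by
  obtain ⟨Q, δ, hδ, C, hC⟩ := isPolyLog_summatory_dk hk
  set N := max (Q.natDegree + 1) k with hNdef
  have hN : Q.natDegree < N := lt_of_lt_of_le (Nat.lt_succ_self _) (le_max_left _ _)
  have hkN : k ≤ N := le_max_right _ _
  have h1 := isBigO_integral_exp_sub_sum
    (f := fun x => summatory (fun n => (dk k n : ℝ)) x / x) ((measurable_summatory _).div measurable_id) hδ hC hN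
  have h2 := isBigO_integral_dk_sub_sum_aCoef hk
  set r : ℕ → ℝ := fun j => Q.coeff j * j.factorial - if j < k then aCoef k j else 0 with hr
  have hite (u : ℕ → ℝ) : ∑ j ∈ Finset.range k, u j =
      ∑ j ∈ Finset.range N, if j < k then u j else 0 := by
    rw [← Finset.sum_filter]
    refine Finset.sum_congr ?_ fun _ _ => rfl
    ext j
    simp only [Finset.mem_filter, Finset.mem_range]
    omega
  have hr0 : ∀ j < N, r j = 0 := by
    refine eq_zero_of_isBigO_sum_div_pow r N ((h2.sub h1).congr_left fun w => ?_)
    rw [hite, sub_sub_sub_cancel_left]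
    simp only [hr, sub_div, Finset.sum_sub_distrib, ite_div, zero_div]
  have hQ (y : ℝ) : Q.eval y = ∑ j ∈ Finset.range k, aCoef k j / j.factorial * y ^ j := by
    rw [Polynomial.eval_eq_sum_range' hN, hite]
    refine Finset.sum_congr rfl fun j hj => ?_
    have hj0 := hr0 j (Finset.mem_range.1 hj)
    have hfac : (j.factorial : ℝ) ≠ 0 := by positivity
    rw [hr, sub_eq_zero] at hj0
    rw [eq_div_of_mul_eq hfac hj0]
    split_ifs <;> simp
  refine ⟨C, δ, hδ, fun x hx => ?_⟩
  have hx0 : 0 < x := by linarith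
  have h := hC x hx
  have hD : Deltak k x = x * (summatory (fun n => (dk k n : ℝ)) x / x - Q.eval (Real.log x)) := by
    rw [hQ, Deltak, summatory, mul_sub, mul_div_cancel₀ _ hx0.ne']
  rw [hD, abs_mul, abs_of_pos hx0]
  calc x * _ ≤ x * (C * x ^ (-δ)) := mul_le_mul_of_nonneg_left h hx0.le
    _ = _ := by ring

lemma measurable_Deltak (k : ℕ) : Measurable (Deltak k) :=
  (measurable_summatory _).sub (measurable_id.mul (Finset.measurable_fun_sum _ fun _ _ =>
    (Real.measurable_log.pow_const _).const_mul _))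

lemma integrableOn_abs_Deltak_mul {k : ℕ} (hk : 0 < k) {σ : ℝ} (hσ : σ < 1) :
    IntegrableOn (fun r : ℝ => |Deltak k r| * Real.log r ^ (-σ) / r ^ 2) (Set.Ioi 1) := by
  obtain ⟨C, δ, hδ, hC⟩ := exists_abs_Deltak_le hk
  rw [integrableOn_Ioi_one_iff_comp_exp]
  refine Integrable.mono' ((integrableOn_rpow_mul_exp_neg_mul (a := 1 - σ) (by linarith)
    hδ).const_mul C) ?_ ((ae_restrict_iff' measurableSet_Ioi).2 (Eventually.of_forall ?_))
  · have hm : Measurable fun r : ℝ => |Deltak k r| * Real.log r ^ (-σ) / r ^ 2 :=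
      ((measurable_Deltak k).abs.mul (Real.measurable_log.pow_const _)).div
        (measurable_id.pow_const 2)
    exact (Real.measurable_exp.smul (hm.comp Real.measurable_exp)).aestronglyMeasurable
  · intro t ht
    have ht0 : (0 : ℝ) < t := ht
    have h := hC (Real.exp t) (Real.one_le_exp ht0.le)
    have he := Real.exp_pos t
    rw [← Real.exp_mul, mul_neg, mul_comm t] at h
    rw [Real.log_exp, smul_eq_mul, Real.norm_eq_abs, abs_of_nonneg (by positivity)]
    calc Real.exp t * (|Deltak k (Real.exp t)| * t ^ (-σ) / Real.exp t ^ 2)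
        = |Deltak k (Real.exp t)| * (t ^ (-σ) / Real.exp t) := by field_simp
      _ ≤ C * (Real.exp t * Real.exp (-(δ * t))) * (t ^ (-σ) / Real.exp t) :=
          mul_le_mul_of_nonneg_right h (by positivity)
      _ = C * (t ^ (1 - σ - 1) * Real.exp (-(δ * t))) := by
          rw [show 1 - σ - 1 = -σ by ring]
          field_simp

lemma norm_Deltak_mul_log_cpow (k : ℕ) (s : ℂ) {r : ℝ} (hr : 1 < r) :
    ‖(Deltak k r : ℂ) * (Real.log r : ℂ) ^ (-s) / (r : ℂ) ^ 2‖ =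
      |Deltak k r| * Real.log r ^ (-s.re) / r ^ 2 := by
  rw [norm_div, norm_mul, norm_pow, Complex.norm_real, Complex.norm_real, Real.norm_eq_abs,
    Real.norm_eq_abs, sq_abs, Complex.norm_cpow_eq_rpow_re_of_pos (Real.log_pos hr), neg_re]

lemma integrableOn_Deltak_mul_log_cpow {k : ℕ} (hk : 0 < k) {s : ℂ} (hs : s.re < 1) :
    IntegrableOn (fun r : ℝ => (Deltak k r : ℂ) * (Real.log r : ℂ) ^ (-s) / (r : ℂ) ^ 2)
      (Set.Ioi 1) := by
  refine Integrable.mono' (integrableOn_abs_Deltak_mul hk hs) ?_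
    ((ae_restrict_iff' measurableSet_Ioi).2 (Eventually.of_forall fun r hr =>
      (norm_Deltak_mul_log_cpow k s hr).le))
  exact (((Complex.measurable_ofReal.comp (measurable_Deltak k)).mul
    ((Complex.measurable_ofReal.comp Real.measurable_log).pow_const _)).div
      (Complex.measurable_ofReal.pow_const 2)).aestronglyMeasurable

lemma integral_norm_cpow_mul_comp_mul_left (f : ℝ → ℂ) (s : ℂ) {L : ℝ} (hL : 0 < L) :
    ∫ x in Set.Ioi (0 : ℝ), ‖(x : ℂ) ^ (s - 1) * f (L * x)‖ =
      L ^ (-s.re) * ∫ x in Set.Ioi (0 : ℝ), ‖(x : ℂ) ^ (s - 1) * f x‖ := by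
  have h := integral_comp_mul_left_Ioi (fun x : ℝ => ‖(x : ℂ) ^ (s - 1) * f x‖) 0 hL
  rw [mul_zero, smul_eq_mul, eq_inv_mul_iff_mul_eq₀ hL.ne'] at h
  rw [← h, ← mul_assoc, ← integral_const_mul]
  refine setIntegral_congr_fun measurableSet_Ioi fun x hx => ?_
  have hx0 : (0 : ℝ) < x := hx
  rw [norm_mul, norm_mul, Complex.norm_cpow_eq_rpow_re_of_pos hx0,
    Complex.norm_cpow_eq_rpow_re_of_pos (mul_pos hL hx0), sub_re, one_re,
    Real.mul_rpow hL.le hx0.le, ← mul_assoc, ← mul_assoc, ← Real.rpow_add_one hL.ne',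
    ← Real.rpow_add hL, show -s.re + 1 + (s.re - 1) = 0 by ring, Real.rpow_zero, one_mul]

/-- The integrand of the double integral behind the Mellin transform of `phik k`. -/
noncomputable def phikKernel (k : ℕ) (s : ℂ) (p : ℝ × ℝ) : ℂ :=
  (Deltak k p.2 : ℂ) / (p.2 : ℂ) ^ 2 *
    ((p.1 : ℂ) ^ (s - 1) * (besselEntire 0 (Real.log p.2 * p.1) : ℂ))

lemma measurable_phikKernel (k : ℕ) (s : ℂ) : Measurable (phikKernel k s) := by
  refine Measurable.mul (Measurable.div ?_ ?_) (Measurable.mul ?_ ?_)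
  · exact Complex.measurable_ofReal.comp ((measurable_Deltak k).comp measurable_snd)
  · exact (Complex.measurable_ofReal.comp measurable_snd).pow_const 2
  · exact (Complex.measurable_ofReal.comp measurable_fst).pow_const _
  · exact Complex.measurable_ofReal.comp ((continuous_besselEntire 0).measurable.comp
      ((Real.measurable_log.comp measurable_snd).mul measurable_fst))

lemma integrable_phikKernel {k : ℕ} (hk : 0 < k) {s : ℂ} (h1 : 0 < s.re) (h2 : s.re < 1 / 4) :
    Integrable (phikKernel k s)
      ((volume.restrict (Set.Ioi (0 : ℝ))).prod (volume.restrict (Set.Ioi (1 : ℝ)))) := by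
  have hmel := mellinConvergent_besselEntire h1 h2
  rw [integrable_prod_iff' (measurable_phikKernel k s).aestronglyMeasurable]
  constructor
  · refine (ae_restrict_iff' measurableSet_Ioi).2 (Eventually.of_forall fun r hr => ?_)
    exact ((MellinConvergent.comp_mul_left (Real.log_pos hr)).2 hmel).const_mul
      ((Deltak k r : ℂ) / (r : ℂ) ^ 2)
  · set K := ∫ x in Set.Ioi (0 : ℝ), ‖(x : ℂ) ^ (s - 1) * (besselEntire 0 x : ℂ)‖ with hK
    refine IntegrableOn.congr_fun
      ((integrableOn_abs_Deltak_mul hk (σ := s.re) (by linarith)).mul_const K) ?_ measurableSet_Ioi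
    intro r hr
    have hr0 : (0 : ℝ) < r := lt_trans one_pos hr
    simp only [phikKernel]
    rw [integral_congr_ae (Eventually.of_forall fun x => norm_mul _ _), integral_const_mul,
      integral_norm_cpow_mul_comp_mul_left (fun x => (besselEntire 0 x : ℂ)) s (Real.log_pos hr),
      norm_div, norm_pow, Complex.norm_real, Complex.norm_real, Real.norm_eq_abs, Real.norm_eq_abs,
      sq_abs, ← hK]
    ring

lemma integral_phikKernel_snd (k : ℕ) (s : ℂ) {x : ℝ} (hx : 0 < x) :
    ∫ r in Set.Ioi (1 : ℝ), phikKernel k s (x, r) = (phik k x : ℂ) * (x : ℂ) ^ (s - 1) := by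
  rw [phik, ← integral_complex_ofReal, ← integral_mul_const]
  refine setIntegral_congr_fun measurableSet_Ioi fun r hr => ?_
  have hL : 0 < Real.log r := Real.log_pos hr
  simp only [phikKernel]
  rw [besselJ0_two_mul_sqrt (by positivity), mul_comm x]
  push_cast
  ring

lemma integral_phikKernel_fst (k : ℕ) {s : ℂ} (h1 : 0 < s.re) (h2 : s.re < 1 / 4) {r : ℝ}
    (hr : 1 < r) :
    ∫ x in Set.Ioi (0 : ℝ), phikKernel k s (x, r) = Complex.Gamma s / Complex.Gamma (1 - s) *
      ((Deltak k r : ℂ) * (Real.log r : ℂ) ^ (-s) / (r : ℂ) ^ 2) := by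
  have h := mellin_comp_mul_left (fun y : ℝ => (besselEntire 0 y : ℂ)) s (Real.log_pos hr)
  rw [mellin_besselEntire h1 h2] at h
  simp only [mellin, smul_eq_mul] at h
  simp only [phikKernel]
  rw [integral_const_mul, h]
  ring

theorem stmt18 (k : ℕ) (hk : 0 < k) (s : ℂ) (h1 : 0 < s.re) (h2 : s.re < 1 / 4) :
    IntegrableOn (fun x : ℝ => (phik k x : ℂ) * (x : ℂ) ^ (s - 1)) (Set.Ioi 0) ∧
    IntegrableOn (fun r : ℝ => (Deltak k r : ℂ) * (Real.log r : ℂ) ^ (-s) / (r : ℂ) ^ 2)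
      (Set.Ioi 1) ∧
    ∫ x in Set.Ioi (0 : ℝ), (phik k x : ℂ) * (x : ℂ) ^ (s - 1) =
      (Complex.Gamma s / Complex.Gamma (1 - s)) *
        ∫ r in Set.Ioi (1 : ℝ), (Deltak k r : ℂ) * (Real.log r : ℂ) ^ (-s) / (r : ℂ) ^ 2 := by
  have hF := integrable_phikKernel hk h1 h2
  have hsnd : Set.EqOn (fun x : ℝ => ∫ r in Set.Ioi (1 : ℝ), phikKernel k s (x, r))
      (fun x : ℝ => (phik k x : ℂ) * (x : ℂ) ^ (s - 1)) (Set.Ioi 0) :=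
    fun x hx => integral_phikKernel_snd k s hx
  refine ⟨IntegrableOn.congr_fun hF.integral_prod_left hsnd measurableSet_Ioi,
    integrableOn_Deltak_mul_log_cpow hk (by linarith), ?_⟩
  rw [← setIntegral_congr_fun measurableSet_Ioi hsnd, integral_integral_swap
    (f := fun x r => phikKernel k s (x, r)) hF,
    ← integral_const_mul]
  exact setIntegral_congr_fun measurableSet_Ioi fun r hr => integral_phikKernel_fst k h1 h2 hr
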